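/- arXiv:math/0005188 — 8 statements merged into one kernel-verified Lean document; each statement's English description precedes it below -/
import Mathlib

section
/- Let U ⊆ E be an open convex set and let a : E → E be a vector field with ContDiffOn ℝ 1 a U. Then the following are equivalent: (i) for every closed C¹ loop γ in U, the circulation ∮_γ a = ∫ t in (0:ℝ)..1, ⟪a (γ t), deriv γ t⟫ equals 0; (ii) for every x ∈ U and all i j : Fin n, ∂_i a_j x = ∂_j a_i x (skew closedness, i.e. the Jacobian of a is symmetric on U). -/
open MeasureTheory RealInnerProductSpace

/-!
Pass from the field `a` to the one-form `ω y = ⟪a y, ·⟫`. If its derivative `dω` is symmetric, the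
Poincaré lemma on the convex set `U` gives a potential, whose increment along a closed loop is zero.

Conversely, the circulation of `ω` along a small loop `x + r • c` is `r * G r` with
`G r = ∫ ω (x + r • c t) (c' t)`. If it vanishes for all small `r`, then
`G' 0 = ∫ dω_x (c t) (c' t)` vanishes too; when `c` is the ellipse with semi-axes `u` and `v`, this
integral is `π (dω_x u v - dω_x v u)`.
-/

section OneForms

open Filter Set Topology

open Real (cos sin)

open scoped Real Interval

variable {E F : Type*} [NormedAddCommGroup E] [NormedSpace ℝ E]
  [NormedAddCommGroup F] [NormedSpace ℝ F]

/-- The one-form `ω` is conservative on `U`: its circulation along every closed `C¹` loop in `U`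
vanishes. The velocities at the two ends of a loop need not agree. -/
def IsConservativeOn (ω : E → E →L[ℝ] F) (U : Set E) : Prop :=
  ∀ γ : ℝ → E, ContDiff ℝ 1 γ → γ 0 = γ 1 → (∀ t ∈ Icc (0 : ℝ) 1, γ t ∈ U) →
    ∫ t in (0 : ℝ)..1, ω (γ t) (deriv γ t) = 0

theorem forall_apply_basis_comm_iff {ι : Type*} (b : Module.Basis ι ℝ E)
    {A : E →L[ℝ] E →L[ℝ] F} :
    (∀ i j, A (b i) (b j) = A (b j) (b i)) ↔ ∀ u v, A u v = A v u := by
  refine ⟨fun h => ?_, fun h i j => h _ _⟩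
  have hflip : A.toLinearMap₁₂ = A.flip.toLinearMap₁₂ := b.ext fun i => b.ext fun j => h i j
  exact LinearMap.congr_fun₂ hflip

theorem fderiv_clm_apply_const {ω : E → E →L[ℝ] F} {x : E} (hω : DifferentiableAt ℝ ω x)
    (u v : E) :
    fderiv ℝ (fun y => ω y v) x u = fderiv ℝ ω x u v := by
  simp [fderiv_clm_apply hω (differentiableAt_const v)]

theorem eventually_forall_add_smul {x : E} {p : E → Prop} (hp : ∀ᶠ y in 𝓝 x, p y) {X : Type*}
    [TopologicalSpace X] {c : X → E} (hc : Continuous c) {K : Set X} (hK : IsCompact K) :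
    ∀ᶠ r in 𝓝 (0 : ℝ), ∀ t ∈ K, p (x + r • c t) := by
  refine hK.eventually_forall_of_forall_eventually fun t _ => ?_
  have hcont : Continuous fun z : ℝ × X => x + z.1 • c z.2 := by fun_prop
  exact (hcont.tendsto' (0, t) x (by simp)).eventually hp

theorem hasDerivAt_intervalIntegral_of_norm_sub_le {μ : Measure ℝ} {a b r₀ : ℝ} {f : ℝ → ℝ → F}
    {f' : ℝ → F} {bound : ℝ → ℝ}
    (hf_meas : ∀ᶠ r in 𝓝 r₀, AEStronglyMeasurable (f r) (μ.restrict (Ι a b)))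
    (hf_int : IntervalIntegrable (f r₀) μ a b)
    (hf'_meas : AEStronglyMeasurable f' (μ.restrict (Ι a b)))
    (hbound : ∀ᶠ r in 𝓝 r₀, ∀ t ∈ Ι a b, ‖f r t - f r₀ t‖ ≤ bound t * ‖r - r₀‖)
    (hbound_int : IntervalIntegrable bound μ a b)
    (hderiv : ∀ t ∈ Ι a b, HasDerivAt (fun r => f r t) (f' t) r₀) :
    HasDerivAt (fun r => ∫ t in a..b, f r t ∂μ) (∫ t in a..b, f' t ∂μ) r₀ := by
  let L : F ≃L[ℝ] (ℝ →L[ℝ] F) := ContinuousLinearMap.toSpanSingletonCLE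
  obtain ⟨hint, hfderiv⟩ := hasFDerivAt_integral_of_dominated_loc_of_lip'
    (F := f) (F' := fun t => L (f' t)) (hf_meas.and hbound) (fun r hr => hr.1) hf_int.def'
    (L.continuous.comp_aestronglyMeasurable hf'_meas)
    (ae_restrict_of_forall_mem measurableSet_uIoc fun t ht r hr => hr.2 t ht) hbound_int.def'
    (ae_restrict_of_forall_mem measurableSet_uIoc fun t ht => (hderiv t ht).hasFDerivAt)
  simp only [intervalIntegral.intervalIntegral_eq_integral_uIoc]
  refine (hfderiv.hasDerivAt.const_smul _).congr_deriv ?_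
  rw [ContinuousLinearMap.integral_apply hint]
  simp [L]

theorem hasDerivAt_integral_apply_add_smul {x : E} {ω : E → E →L[ℝ] F}
    (hω : ∀ᶠ y in 𝓝 x, ContinuousAt ω y) {A : E →L[ℝ] E →L[ℝ] F} (hA : HasFDerivAt ω A x)
    {c v : ℝ → E} (hc : Continuous c) (hv : Continuous v) (a b : ℝ) :
    HasDerivAt (fun r : ℝ => ∫ t in a..b, ω (x + r • c t) (v t))
      (∫ t in a..b, A (c t) (v t)) 0 := by
  obtain ⟨C, hC⟩ := hA.isBigO_sub.bound
  have hnear : ∀ᶠ r in 𝓝 (0 : ℝ), ∀ t ∈ [[a, b]], ContinuousAt ω (x + r • c t) ∧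
      ‖ω (x + r • c t) - ω x‖ ≤ C * ‖x + r • c t - x‖ :=
    eventually_forall_add_smul (hω.and hC) hc isCompact_uIcc
  have hcont : ∀ᶠ r in 𝓝 (0 : ℝ), ContinuousOn (fun t => ω (x + r • c t) (v t)) [[a, b]] := by
    filter_upwards [hnear] with r hr t ht
    have hpath : ContinuousAt (fun s => ω (x + r • c s)) t :=
      ContinuousAt.comp' (f := fun s => x + r • c s) (hr t ht).1 (by fun_prop)
    exact (hpath.clm_apply hv.continuousAt).continuousWithinAt
  have hlip : ∀ᶠ r in 𝓝 (0 : ℝ), ∀ t ∈ [[a, b]],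
      ‖ω (x + r • c t) (v t) - ω x (v t)‖ ≤ C * ‖c t‖ * ‖v t‖ * ‖r‖ := by
    filter_upwards [hnear] with r hr t ht
    calc ‖ω (x + r • c t) (v t) - ω x (v t)‖
        ≤ ‖ω (x + r • c t) - ω x‖ * ‖v t‖ := (ω (x + r • c t) - ω x).le_opNorm (v t)
      _ ≤ C * ‖x + r • c t - x‖ * ‖v t‖ := by gcongr; exact (hr t ht).2
      _ = C * ‖c t‖ * ‖v t‖ * ‖r‖ := by rw [add_sub_cancel_left, norm_smul]; ring
  have hpoint (t : ℝ) : HasDerivAt (fun r : ℝ => ω (x + r • c t) (v t)) (A (c t) (v t)) 0 := by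
    have hline : HasDerivAt (fun r : ℝ => x + r • c t) (c t) 0 := by
      simpa using ((hasDerivAt_id (0 : ℝ)).smul_const (c t)).const_add x
    have happly : HasFDerivAt (fun y => ω y (v t)) (A.flip (v t)) x := by
      simpa using hA.clm_apply (hasFDerivAt_const (v t) x)
    exact happly.comp_hasDerivAt_of_eq 0 hline (by simp)
  refine hasDerivAt_intervalIntegral_of_norm_sub_le (bound := fun t => C * ‖c t‖ * ‖v t‖)
    (hcont.mono fun r hr => hr.intervalIntegrable.def'.aestronglyMeasurable)
    hcont.self_of_nhds.intervalIntegrable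
    (by fun_prop : Continuous fun t => A (c t) (v t)).aestronglyMeasurable ?_
    (Continuous.intervalIntegrable (by fun_prop) a b) fun t _ => hpoint t
  simpa using hlip.mono fun r hr t ht => hr t (uIoc_subset_uIcc ht)

/-- The ellipse centred at the origin with conjugate semi-axes `u` and `v`, parametrized by
`[0, 1]`. -/
noncomputable def ellipseLoop (u v : E) (t : ℝ) : E :=
  cos (2 * π * t) • u + sin (2 * π * t) • v

theorem contDiff_ellipseLoop (u v : E) : ContDiff ℝ 1 (ellipseLoop u v) := by
  unfold ellipseLoop
  fun_prop

theorem ellipseLoop_zero_eq_one (u v : E) : ellipseLoop u v 0 = ellipseLoop u v 1 := by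
  simp [ellipseLoop]

theorem deriv_ellipseLoop (u v : E) (t : ℝ) :
    deriv (ellipseLoop u v) t = (2 * π) • (cos (2 * π * t) • v - sin (2 * π * t) • u) := by
  have hangle : HasDerivAt (fun s : ℝ => 2 * π * s) (2 * π) t := by
    simpa using (hasDerivAt_id t).const_mul (2 * π)
  refine ((hangle.cos.smul_const u).add (hangle.sin.smul_const v)).deriv.trans ?_
  module

variable [CompleteSpace F]

theorem integral_bilin_ellipseLoop (B : E →L[ℝ] E →L[ℝ] F) (u v : E) :
    ∫ t in (0 : ℝ)..1, B (ellipseLoop u v t) (deriv (ellipseLoop u v) t) =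
      π • (B u v - B v u) := by
  let g (s : ℝ) : F := cos s ^ 2 • B u v - sin s ^ 2 • B v u + (sin s * cos s) • (B v v - B u u)
  have hg (t : ℝ) :
      B (ellipseLoop u v t) (deriv (ellipseLoop u v) t) = (2 * π) • g (2 * π * t) := by
    simp only [deriv_ellipseLoop, ellipseLoop, g, map_add, map_sub, map_smul, add_apply,
      smul_apply]
    module
  calc ∫ t in (0 : ℝ)..1, B (ellipseLoop u v t) (deriv (ellipseLoop u v) t)
      = ∫ s in (0 : ℝ)..2 * π, g s := by
        simp only [hg, intervalIntegral.integral_smul,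
          intervalIntegral.smul_integral_comp_mul_left, mul_zero, mul_one]
    _ = (∫ s in (0 : ℝ)..2 * π, cos s ^ 2) • B u v - (∫ s in (0 : ℝ)..2 * π, sin s ^ 2) • B v u +
          (∫ s in (0 : ℝ)..2 * π, sin s * cos s) • (B v v - B u u) := by
        simp only [← intervalIntegral.integral_smul_const]
        rw [← intervalIntegral.integral_sub, ← intervalIntegral.integral_add] <;>
          exact Continuous.intervalIntegrable (by fun_prop) _ _
    _ = π • (B u v - B v u) := by
        simp only [integral_cos_sq, integral_sin_sq, integral_sin_mul_cos₁, Real.cos_two_pi,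
          Real.sin_two_pi, Real.cos_zero, Real.sin_zero]
        module

theorem integral_apply_deriv_eq_sub {U : Set E} {ω : E → E →L[ℝ] F} (hω : ContinuousOn ω U)
    {f : E → F} (hf : ∀ x ∈ U, HasFDerivAt f (ω x) x) {γ : ℝ → E} (hγ : ContDiff ℝ 1 γ)
    {a b : ℝ} (hγU : ∀ t ∈ [[a, b]], γ t ∈ U) :
    ∫ t in a..b, ω (γ t) (deriv γ t) = f (γ b) - f (γ a) := by
  have hcont : ContinuousOn (fun t => ω (γ t) (deriv γ t)) [[a, b]] :=
    (hω.comp hγ.continuous.continuousOn hγU).clm_apply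
      (hγ.continuous_deriv le_rfl).continuousOn
  exact intervalIntegral.integral_eq_sub_of_hasDerivAt
    (fun t ht => (hf _ (hγU t ht)).comp_hasDerivAt t (hγ.differentiable one_ne_zero t).hasDerivAt)
    hcont.intervalIntegrable

namespace IsConservativeOn

theorem of_hasFDerivAt {U : Set E} {ω : E → E →L[ℝ] F} (hω : ContinuousOn ω U)
    {f : E → F} (hf : ∀ x ∈ U, HasFDerivAt f (ω x) x) : IsConservativeOn ω U := by
  intro γ hγ hloop hγU
  rw [integral_apply_deriv_eq_sub hω hf hγ (by rwa [uIcc_of_le zero_le_one]), hloop, sub_self]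

protected theorem const (φ : E →L[ℝ] F) : IsConservativeOn (fun _ => φ) univ :=
  of_hasFDerivAt continuousOn_const fun _ _ => φ.hasFDerivAt

variable {x : E} {U : Set E} {ω : E → E →L[ℝ] F} {A : E →L[ℝ] E →L[ℝ] F}

theorem integral_bilin_eq_zero (h : IsConservativeOn ω U) (hU : U ∈ 𝓝 x)
    (hω : ∀ᶠ y in 𝓝 x, ContinuousAt ω y) (hA : HasFDerivAt ω A x) {c : ℝ → E}
    (hc : ContDiff ℝ 1 c) (hloop : c 0 = c 1) :
    ∫ t in (0 : ℝ)..1, A (c t) (deriv c t) = 0 := by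
  have hvanish : ∀ᶠ r in 𝓝 (0 : ℝ), ∫ t in (0 : ℝ)..1, ω (x + r • c t) (deriv c t) = 0 := by
    filter_upwards [eventually_forall_add_smul hU hc.continuous isCompact_Icc] with r hr
    rcases eq_or_ne r 0 with rfl | hr0
    · simpa using IsConservativeOn.const (ω x) c hc hloop fun _ _ => mem_univ _
    · have hscaled := h (fun t => x + r • c t) (contDiff_const.add (hc.const_smul r))
        (by simp only [hloop]) hr
      have hderiv (t : ℝ) : deriv (fun t => x + r • c t) t = r • deriv c t :=
        (((hc.differentiable one_ne_zero t).hasDerivAt.const_smul r).const_add x).deriv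
      simp only [hderiv, map_smul, intervalIntegral.integral_smul] at hscaled
      exact (smul_eq_zero.1 hscaled).resolve_left hr0
  have hderiv := hasDerivAt_integral_apply_add_smul hω hA hc.continuous
    (hc.continuous_deriv le_rfl) 0 1
  exact hderiv.unique ((hasDerivAt_const 0 0).congr_of_eventuallyEq hvanish)

theorem apply_comm (h : IsConservativeOn ω U) (hU : U ∈ 𝓝 x)
    (hω : ∀ᶠ y in 𝓝 x, ContinuousAt ω y) (hA : HasFDerivAt ω A x) (u v : E) :
    A u v = A v u := by
  have harea := h.integral_bilin_eq_zero hU hω hA (contDiff_ellipseLoop u v)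
    (ellipseLoop_zero_eq_one u v)
  rw [integral_bilin_ellipseLoop] at harea
  exact sub_eq_zero.1 ((smul_eq_zero.1 harea).resolve_left Real.pi_ne_zero)

end IsConservativeOn

theorem stmt_0_general {U : Set E} (hUopen : IsOpen U) (hUconv : Convex ℝ U)
    {ω : E → E →L[ℝ] F} (hω : DifferentiableOn ℝ ω U) :
    IsConservativeOn ω U ↔ ∀ x ∈ U, ∀ u v, fderiv ℝ ω x u v = fderiv ℝ ω x v u := by
  refine ⟨fun h x hx => ?_, fun hsymm => ?_⟩
  · have hU := hUopen.mem_nhds hx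
    have hcont : ∀ᶠ y in 𝓝 x, ContinuousAt ω y := eventually_of_mem hU fun y hy =>
      hω.continuousOn.continuousAt (hUopen.mem_nhds hy)
    exact h.apply_comm hU hcont (hω.differentiableAt hU).hasFDerivAt
  · obtain ⟨f, hf⟩ := hUconv.exists_forall_hasFDerivAt_of_fderiv_symmetric hUopen hω hsymm
    exact .of_hasFDerivAt hω.continuousOn hf

end OneForms

theorem stmt_0 (n : ℕ) (hn : 1 ≤ n) (U : Set (EuclideanSpace ℝ (Fin n)))
    (hUopen : IsOpen U) (hUconv : Convex ℝ U)
    (a : EuclideanSpace ℝ (Fin n) → EuclideanSpace ℝ (Fin n))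
    (ha : ContDiffOn ℝ 1 a U) :
    (∀ γ : ℝ → EuclideanSpace ℝ (Fin n), ContDiff ℝ 1 γ → γ 0 = γ 1 →
        (∀ t ∈ Set.Icc (0:ℝ) 1, γ t ∈ U) →
        ∫ t in (0:ℝ)..1, ⟪a (γ t), deriv γ t⟫ = 0) ↔
      (∀ x ∈ U, ∀ i j : Fin n,
        fderiv ℝ (fun y => ⟪a y, EuclideanSpace.single j (1:ℝ)⟫) x
            (EuclideanSpace.single i (1:ℝ)) =
          fderiv ℝ (fun y => ⟪a y, EuclideanSpace.single i (1:ℝ)⟫) x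
            (EuclideanSpace.single j (1:ℝ))) := by
  have hω : DifferentiableOn ℝ (fun y => innerSL ℝ (a y)) U :=
    (innerSL ℝ).differentiable.comp_differentiableOn (ha.differentiableOn one_ne_zero)
  refine (stmt_0_general hUopen hUconv hω).trans (forall₂_congr fun x hx => ?_)
  rw [← forall_apply_basis_comm_iff (EuclideanSpace.basisFun (Fin n) ℝ).toBasis]
  simp [← fderiv_clm_apply_const (hω.differentiableAt (hUopen.mem_nhds hx))]
end

section
/- Let U ⊆ ℝ × ℝ be open and let a₁ a₂ : ℝ × ℝ → ℝ be functions with ContDiffOn ℝ 1 a₁ U and ContDiffOn ℝ 1 a₂ U. Then the following are equivalent: (i) for all p₁ < q₁ and p₂ < q₂ with Set.Icc (p₁, p₂) (q₁, q₂) ⊆ U, the circulation around the boundary of the rectangle vanishes: (∫ t in p₁..q₁, a₁ (t, p₂)) + (∫ t in p₂..q₂, a₂ (q₁, t)) − (∫ t in p₁..q₁, a₁ (t, q₂)) − (∫ t in p₂..q₂, a₂ (p₁, t)) = 0; (ii) for every x ∈ U, ∂₁ a₂ x = ∂₂ a₁ x. -/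
open MeasureTheory

/-!
Green's theorem turns the circulation around a rectangle into the integral of the curl
`∂₁ a₂ - ∂₂ a₁`, which is zero when the curl vanishes. Conversely, the curl at a point is the limit
of circulation per area over shrinking squares: replacing the field by its first-order expansion
costs `o(ε)` on a contour of length `8ε`, which is negligible against the area `4ε²`.
-/

section

open Set Filter Metric Topology

variable {E : Type*} [NormedAddCommGroup E] {a₁ a₂ b₁ b₂ : ℝ × ℝ → E} {p q x : ℝ × ℝ}

theorem intervalIntegrable_fst_of_continuousOn_Icc {f : ℝ × ℝ → E}
    (hf : ContinuousOn f (Icc p q)) (hpq : p ≤ q) {s : ℝ} (hs : s ∈ Icc p.2 q.2) :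
    IntervalIntegrable (fun t ↦ f (t, s)) volume p.1 q.1 :=
  (hf.comp (by fun_prop) fun _ ht ↦ ⟨⟨ht.1, hs.1⟩, ht.2, hs.2⟩).intervalIntegrable_of_Icc hpq.1

theorem intervalIntegrable_snd_of_continuousOn_Icc {f : ℝ × ℝ → E}
    (hf : ContinuousOn f (Icc p q)) (hpq : p ≤ q) {s : ℝ} (hs : s ∈ Icc p.1 q.1) :
    IntervalIntegrable (fun t ↦ f (s, t)) volume p.2 q.2 :=
  (hf.comp (by fun_prop) fun _ ht ↦ ⟨⟨hs.1, ht.1⟩, hs.2, ht.2⟩).intervalIntegrable_of_Icc hpq.2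

variable [NormedSpace ℝ E]

/-- The circulation `∮ a₁ dx₁ + a₂ dx₂` around the boundary, oriented counterclockwise, of the
rectangle `Set.Icc p q` with lower left corner `p` and upper right corner `q`. -/
noncomputable def rectCirculation (a₁ a₂ : ℝ × ℝ → E) (p q : ℝ × ℝ) : E :=
  (∫ t in p.1..q.1, a₁ (t, p.2)) + (∫ t in p.2..q.2, a₂ (q.1, t)) -
    (∫ t in p.1..q.1, a₁ (t, q.2)) - (∫ t in p.2..q.2, a₂ (p.1, t))

theorem rectCirculation_sub (hpq : p ≤ q)
    (ha₁ : ContinuousOn a₁ (Icc p q)) (ha₂ : ContinuousOn a₂ (Icc p q))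
    (hb₁ : ContinuousOn b₁ (Icc p q)) (hb₂ : ContinuousOn b₂ (Icc p q)) :
    rectCirculation (a₁ - b₁) (a₂ - b₂) p q =
      rectCirculation a₁ a₂ p q - rectCirculation b₁ b₂ p q := by
  have hsub₁ {s : ℝ} (hs : s ∈ Icc p.2 q.2) := intervalIntegral.integral_sub
    (intervalIntegrable_fst_of_continuousOn_Icc ha₁ hpq hs)
    (intervalIntegrable_fst_of_continuousOn_Icc hb₁ hpq hs)
  have hsub₂ {s : ℝ} (hs : s ∈ Icc p.1 q.1) := intervalIntegral.integral_sub
    (intervalIntegrable_snd_of_continuousOn_Icc ha₂ hpq hs)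
    (intervalIntegrable_snd_of_continuousOn_Icc hb₂ hpq hs)
  simp only [rectCirculation, Pi.sub_apply, hsub₁ (left_mem_Icc.2 hpq.2),
    hsub₁ (right_mem_Icc.2 hpq.2), hsub₂ (left_mem_Icc.2 hpq.1), hsub₂ (right_mem_Icc.2 hpq.1)]
  abel

theorem norm_rectCirculation_le {C : ℝ} (hpq : p ≤ q)
    (h₁ : ∀ y ∈ Icc p q, ‖a₁ y‖ ≤ C) (h₂ : ∀ y ∈ Icc p q, ‖a₂ y‖ ≤ C) :
    ‖rectCirculation a₁ a₂ p q‖ ≤ C * (2 * ((q.1 - p.1) + (q.2 - p.2))) := by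
  have hedge₁ {s : ℝ} (hs : s ∈ Icc p.2 q.2) :
      ‖∫ t in p.1..q.1, a₁ (t, s)‖ ≤ C * (q.1 - p.1) := by
    rw [← abs_of_nonneg (sub_nonneg.2 hpq.1)]
    refine intervalIntegral.norm_integral_le_of_norm_le_const fun t ht ↦ ?_
    rw [uIoc_of_le hpq.1] at ht
    exact h₁ _ ⟨⟨ht.1.le, hs.1⟩, ht.2, hs.2⟩
  have hedge₂ {s : ℝ} (hs : s ∈ Icc p.1 q.1) :
      ‖∫ t in p.2..q.2, a₂ (s, t)‖ ≤ C * (q.2 - p.2) := by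
    rw [← abs_of_nonneg (sub_nonneg.2 hpq.2)]
    refine intervalIntegral.norm_integral_le_of_norm_le_const fun t ht ↦ ?_
    rw [uIoc_of_le hpq.2] at ht
    exact h₂ _ ⟨⟨hs.1, ht.1.le⟩, hs.2, ht.2⟩
  calc ‖rectCirculation a₁ a₂ p q‖
      ≤ C * (q.1 - p.1) + C * (q.2 - p.2) + C * (q.1 - p.1) + C * (q.2 - p.2) :=
        norm_sub_le_of_le
          (norm_sub_le_of_le
            (norm_add_le_of_le (hedge₁ (left_mem_Icc.2 hpq.2)) (hedge₂ (right_mem_Icc.2 hpq.1)))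
            (hedge₁ (right_mem_Icc.2 hpq.2)))
          (hedge₂ (left_mem_Icc.2 hpq.1))
    _ = C * (2 * ((q.1 - p.1) + (q.2 - p.2))) := by ring

theorem rectCirculation_eq_setIntegral_curl {a₁' a₂' : ℝ × ℝ → ℝ × ℝ →L[ℝ] E} (hpq : p ≤ q)
    (hc₁ : ContinuousOn a₁ (Icc p q)) (hc₂ : ContinuousOn a₂ (Icc p q))
    (hd₁ : ∀ x ∈ Ioo p.1 q.1 ×ˢ Ioo p.2 q.2, HasFDerivAt a₁ (a₁' x) x)
    (hd₂ : ∀ x ∈ Ioo p.1 q.1 ×ˢ Ioo p.2 q.2, HasFDerivAt a₂ (a₂' x) x)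
    (hint : IntegrableOn (fun x ↦ a₂' x (1, 0) - a₁' x (0, 1)) (Icc p q)) :
    rectCirculation a₁ a₂ p q = ∫ x in Icc p q, (a₂' x (1, 0) - a₁' x (0, 1)) := by
  have hdiv := integral_divergence_prod_Icc_of_hasFDerivAt_of_le a₂ (-a₁) a₂' (-a₁') p q hpq
    hc₂ hc₁.neg hd₂ (fun x hx ↦ (hd₁ x hx).neg)
    (by simpa only [Pi.neg_apply, neg_apply, ← sub_eq_add_neg] using hint)
  simp only [Pi.neg_apply, neg_apply, ← sub_eq_add_neg, intervalIntegral.integral_neg] at hdiv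
  rw [hdiv, rectCirculation]
  abel

theorem rectCirculation_affine [CompleteSpace E] (c₁ c₂ : E) (A₁ A₂ : ℝ × ℝ →L[ℝ] E)
    (x : ℝ × ℝ) (hpq : p ≤ q) :
    rectCirculation (fun y ↦ c₁ + A₁ (y - x)) (fun y ↦ c₂ + A₂ (y - x)) p q =
      ((q.1 - p.1) * (q.2 - p.2)) • (A₂ (1, 0) - A₁ (0, 1)) := by
  have hderiv (c : E) (A : ℝ × ℝ →L[ℝ] E) (y : ℝ × ℝ) :
      HasFDerivAt (fun z ↦ c + A (z - x)) A y :=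
    (A.hasFDerivAt.comp y ((hasFDerivAt_id y).sub_const x)).const_add c
  rw [rectCirculation_eq_setIntegral_curl hpq (by fun_prop) (by fun_prop)
      (fun y _ ↦ hderiv c₁ A₁ y) (fun y _ ↦ hderiv c₂ A₂ y)
      (continuousOn_const.integrableOn_compact isCompact_Icc),
    setIntegral_const, Icc_prod_eq, Measure.volume_eq_prod, measureReal_prod_prod,
    Real.volume_real_Icc_of_le hpq.1, Real.volume_real_Icc_of_le hpq.2]

theorem norm_rectCirculation_sub_area_smul_le [CompleteSpace E] {c₁ c₂ : E}
    {A₁ A₂ : ℝ × ℝ →L[ℝ] E} {C : ℝ} (hpq : p ≤ q)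
    (hc₁ : ContinuousOn a₁ (Icc p q)) (hc₂ : ContinuousOn a₂ (Icc p q))
    (h₁ : ∀ y ∈ Icc p q, ‖a₁ y - c₁ - A₁ (y - x)‖ ≤ C)
    (h₂ : ∀ y ∈ Icc p q, ‖a₂ y - c₂ - A₂ (y - x)‖ ≤ C) :
    ‖rectCirculation a₁ a₂ p q - ((q.1 - p.1) * (q.2 - p.2)) • (A₂ (1, 0) - A₁ (0, 1))‖ ≤
      C * (2 * ((q.1 - p.1) + (q.2 - p.2))) := by
  rw [← rectCirculation_affine c₁ c₂ A₁ A₂ x hpq,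
    ← rectCirculation_sub hpq hc₁ hc₂ (by fun_prop) (by fun_prop)]
  simp only [sub_sub] at h₁ h₂
  exact norm_rectCirculation_le hpq h₁ h₂

theorem Icc_sub_add_eq_closedBall (x : ℝ × ℝ) (ε : ℝ) :
    Icc (x - (ε, ε)) (x + (ε, ε)) = closedBall x ε := by
  rw [← closedBall_prod_same, Real.closedBall_eq_Icc, Real.closedBall_eq_Icc, Icc_prod_Icc]
  rfl

theorem isLittleO_rectCirculation_square_sub_area_smul [CompleteSpace E] {A₁ A₂ : ℝ × ℝ →L[ℝ] E}
    (hc₁ : ∀ᶠ y in 𝓝 x, ContinuousAt a₁ y) (hc₂ : ∀ᶠ y in 𝓝 x, ContinuousAt a₂ y)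
    (hd₁ : HasFDerivAt a₁ A₁ x) (hd₂ : HasFDerivAt a₂ A₂ x) :
    (fun ε : ℝ ↦ rectCirculation a₁ a₂ (x - (ε, ε)) (x + (ε, ε)) -
      (4 * ε ^ 2) • (A₂ (1, 0) - A₁ (0, 1))) =o[𝓝[>] 0] fun ε ↦ 4 * ε ^ 2 := by
  refine Asymptotics.isLittleO_iff.2 fun c hc ↦ ?_
  have hnear := (hc₁.and hc₂).and
    ((hd₁.isLittleO.def (half_pos hc)).and (hd₂.isLittleO.def (half_pos hc)))
  filter_upwards [self_mem_nhdsWithin,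
    (eventually_closedBall_subset hnear).filter_mono nhdsWithin_le_nhds] with ε hε hball
  rw [mem_Ioi] at hε
  rw [← Icc_sub_add_eq_closedBall] at hball
  have hle : x - (ε, ε) ≤ x + (ε, ε) := by
    constructor <;> simp only [Prod.fst_add, Prod.fst_sub, Prod.snd_add, Prod.snd_sub] <;> linarith
  have hdist {y : ℝ × ℝ} (hy : y ∈ Icc (x - (ε, ε)) (x + (ε, ε))) :
      c / 2 * ‖y - x‖ ≤ c / 2 * ε := by
    rw [Icc_sub_add_eq_closedBall, mem_closedBall_iff_norm] at hy
    gcongr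
  have hbound := norm_rectCirculation_sub_area_smul_le hle
    (fun y hy ↦ (hball hy).1.1.continuousWithinAt) (fun y hy ↦ (hball hy).1.2.continuousWithinAt)
    (fun y hy ↦ (hball hy).2.1.trans (hdist hy)) (fun y hy ↦ (hball hy).2.2.trans (hdist hy))
  have hside (s : ℝ) : s + ε - (s - ε) = 2 * ε := by ring
  simp only [Prod.fst_add, Prod.fst_sub, Prod.snd_add, Prod.snd_sub, hside] at hbound
  rw [Real.norm_of_nonneg (by positivity)]
  convert hbound using 1
  · ring_nf
  · ring

theorem tendsto_rectCirculation_square [CompleteSpace E] {A₁ A₂ : ℝ × ℝ →L[ℝ] E}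
    (hc₁ : ∀ᶠ y in 𝓝 x, ContinuousAt a₁ y) (hc₂ : ∀ᶠ y in 𝓝 x, ContinuousAt a₂ y)
    (hd₁ : HasFDerivAt a₁ A₁ x) (hd₂ : HasFDerivAt a₂ A₂ x) :
    Tendsto (fun ε : ℝ ↦ (4 * ε ^ 2)⁻¹ • rectCirculation a₁ a₂ (x - (ε, ε)) (x + (ε, ε)))
      (𝓝[>] 0) (𝓝 (A₂ (1, 0) - A₁ (0, 1))) := by
  rw [← tendsto_sub_nhds_zero_iff]
  have hsmall := isLittleO_rectCirculation_square_sub_area_smul hc₁ hc₂ hd₁ hd₂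
  refine hsmall.tendsto_inv_smul_nhds_zero.congr' ?_
  filter_upwards [self_mem_nhdsWithin] with ε hε
  have harea : 4 * ε ^ 2 ≠ 0 := (mul_pos four_pos (pow_pos hε 2)).ne'
  rw [smul_sub, inv_smul_smul₀ harea]

theorem rectCirculation_eq_zero_of_fderiv_eq (hpq : p ≤ q)
    (ha₁ : ∀ x ∈ Icc p q, DifferentiableAt ℝ a₁ x) (ha₂ : ∀ x ∈ Icc p q, DifferentiableAt ℝ a₂ x)
    (hcurl : ∀ x ∈ Icc p q, fderiv ℝ a₂ x (1, 0) = fderiv ℝ a₁ x (0, 1)) :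
    rectCirculation a₁ a₂ p q = 0 := by
  have hinterior {x : ℝ × ℝ} (hx : x ∈ Ioo p.1 q.1 ×ˢ Ioo p.2 q.2) : x ∈ Icc p q :=
    ⟨⟨hx.1.1.le, hx.2.1.le⟩, hx.1.2.le, hx.2.2.le⟩
  have hzero : EqOn (fun x ↦ fderiv ℝ a₂ x (1, 0) - fderiv ℝ a₁ x (0, 1)) 0 (Icc p q) :=
    fun x hx ↦ sub_eq_zero.2 (hcurl x hx)
  rw [rectCirculation_eq_setIntegral_curl hpq
    (fun x hx ↦ (ha₁ x hx).continuousAt.continuousWithinAt)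
    (fun x hx ↦ (ha₂ x hx).continuousAt.continuousWithinAt)
    (fun x hx ↦ (ha₁ x (hinterior hx)).hasFDerivAt) (fun x hx ↦ (ha₂ x (hinterior hx)).hasFDerivAt)
    (integrableOn_zero.congr_fun hzero.symm measurableSet_Icc)]
  exact setIntegral_eq_zero_of_forall_eq_zero hzero

theorem fderiv_eq_of_rectCirculation_square_eq_zero [CompleteSpace E]
    (ha₁ : ∀ᶠ y in 𝓝 x, DifferentiableAt ℝ a₁ y) (ha₂ : ∀ᶠ y in 𝓝 x, DifferentiableAt ℝ a₂ y)
    (hcirc : ∃ᶠ ε in 𝓝[>] (0 : ℝ), rectCirculation a₁ a₂ (x - (ε, ε)) (x + (ε, ε)) = 0) :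
    fderiv ℝ a₂ x (1, 0) = fderiv ℝ a₁ x (0, 1) := by
  have hlim := tendsto_rectCirculation_square (ha₁.mono fun _ h ↦ h.continuousAt)
    (ha₂.mono fun _ h ↦ h.continuousAt) ha₁.self_of_nhds.hasFDerivAt ha₂.self_of_nhds.hasFDerivAt
  refine sub_eq_zero.1 (isClosed_singleton.mem_of_frequently_of_tendsto (hcirc.mono ?_) hlim)
  intro ε hε
  rw [hε, smul_zero, mem_singleton_iff]

theorem stmt_1_general [CompleteSpace E] {U : Set (ℝ × ℝ)} (hU : IsOpen U)
    (ha₁ : DifferentiableOn ℝ a₁ U) (ha₂ : DifferentiableOn ℝ a₂ U) :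
    (∀ p₁ q₁ p₂ q₂ : ℝ, p₁ < q₁ → p₂ < q₂ →
        Icc ((p₁, p₂) : ℝ × ℝ) (q₁, q₂) ⊆ U →
        (∫ t in p₁..q₁, a₁ (t, p₂)) + (∫ t in p₂..q₂, a₂ (q₁, t)) -
            (∫ t in p₁..q₁, a₁ (t, q₂)) - (∫ t in p₂..q₂, a₂ (p₁, t)) = 0) ↔
      (∀ x ∈ U, fderiv ℝ a₂ x (1, 0) = fderiv ℝ a₁ x (0, 1)) := by
  constructor
  · intro hcirc x hx
    have hxU := hU.mem_nhds hx
    refine fderiv_eq_of_rectCirculation_square_eq_zero (ha₁.eventually_differentiableAt hxU)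
      (ha₂.eventually_differentiableAt hxU) (Eventually.frequently ?_)
    filter_upwards [self_mem_nhdsWithin,
      (eventually_closedBall_subset hxU).filter_mono nhdsWithin_le_nhds] with ε hε hball
    rw [mem_Ioi] at hε
    exact hcirc (x.1 - ε) (x.1 + ε) (x.2 - ε) (x.2 + ε) (by linarith) (by linarith)
      ((Icc_sub_add_eq_closedBall x ε).trans_subset hball)
  · intro hcurl p₁ q₁ p₂ q₂ h₁ h₂ hR
    exact rectCirculation_eq_zero_of_fderiv_eq (p := (p₁, p₂)) (q := (q₁, q₂)) ⟨h₁.le, h₂.le⟩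
      (fun x hx ↦ ha₁.differentiableAt (hU.mem_nhds (hR hx)))
      (fun x hx ↦ ha₂.differentiableAt (hU.mem_nhds (hR hx))) fun x hx ↦ hcurl x (hR hx)

end

theorem stmt_1 (U : Set (ℝ × ℝ)) (hU : IsOpen U) (a₁ a₂ : ℝ × ℝ → ℝ)
    (ha₁ : ContDiffOn ℝ 1 a₁ U) (ha₂ : ContDiffOn ℝ 1 a₂ U) :
    (∀ p₁ q₁ p₂ q₂ : ℝ, p₁ < q₁ → p₂ < q₂ →
        Set.Icc ((p₁, p₂) : ℝ × ℝ) (q₁, q₂) ⊆ U →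
        (∫ t in p₁..q₁, a₁ (t, p₂)) + (∫ t in p₂..q₂, a₂ (q₁, t)) -
            (∫ t in p₁..q₁, a₁ (t, q₂)) - (∫ t in p₂..q₂, a₂ (p₁, t)) = 0) ↔
      (∀ x ∈ U, fderiv ℝ a₂ x (1, 0) = fderiv ℝ a₁ x (0, 1)) :=
  stmt_1_general hU (ha₁.differentiableOn one_ne_zero) (ha₂.differentiableOn one_ne_zero)
end

section
/- Let U ⊆ ℝ × ℝ be open and let a₁ a₂ : ℝ × ℝ → ℝ be functions with ContDiffOn ℝ 1 a₁ U and ContDiffOn ℝ 1 a₂ U. Then for all p₁ ≤ q₁ and p₂ ≤ q₂ with Set.Icc (p₁, p₂) (q₁, q₂) ⊆ U, the circulation around the boundary of the rectangle equals the integral of the rotation over the rectangle (Green's theorem): (∫ t in p₁..q₁, a₁ (t, p₂)) + (∫ t in p₂..q₂, a₂ (q₁, t)) − (∫ t in p₁..q₁, a₁ (t, q₂)) − (∫ t in p₂..q₂, a₂ (p₁, t)) = ∫ x in Set.Icc (p₁, p₂) (q₁, q₂), (∂₁ a₂ x − ∂₂ a₁ x). -/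
open MeasureTheory

/-! Green's theorem for `(a₁, a₂)` is the divergence theorem for the field `(a₂, -a₁)`, which is
`(a₁, a₂)` rotated by a right angle. If the components are merely C¹ on the closed rectangle,
`fderiv` may take its junk value `0` on the boundary. That boundary is null, and in the interior
`fderiv` agrees with `fderivWithin`, which is continuous up to the boundary unless the rectangle is
degenerate, hence null; so the rotation is integrable. -/

section IntegrableDerivative

variable {E F : Type*} [NormedAddCommGroup E] [NormedSpace ℝ E] [FiniteDimensional ℝ E]
  [MeasurableSpace E] [BorelSpace E] [NormedAddCommGroup F] [NormedSpace ℝ F]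

theorem integrableOn_fderiv_of_convex_of_isCompact {K : Set E} (hK : Convex ℝ K)
    (hKc : IsCompact K) (μ : Measure E) [μ.IsAddHaarMeasure] {f : E → F}
    (hf : ContDiffOn ℝ 1 f K) : IntegrableOn (fderiv ℝ f) K μ := by
  have interior_ae_eq : interior K =ᵐ[μ] K :=
    interior_ae_eq_of_null_frontier (hK.addHaar_frontier μ)
  rw [← integrableOn_congr_set_ae interior_ae_eq]
  rcases (interior K).eq_empty_or_nonempty with hempty | hnonempty
  · simp only [hempty, integrableOn_empty]
  · have continuousOn_fderivWithin : ContinuousOn (fderivWithin ℝ f K) K :=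
      hf.continuousOn_fderivWithin (uniqueDiffOn_convex hK hnonempty) le_rfl
    have fderivWithin_eq : Set.EqOn (fderivWithin ℝ f K) (fderiv ℝ f) (interior K) :=
      fun x hx => fderivWithin_of_mem_nhds (mem_interior_iff_mem_nhds.mp hx)
    exact ((continuousOn_fderivWithin.integrableOn_compact hKc).mono_set
      interior_subset).congr_fun fderivWithin_eq isOpen_interior.measurableSet

end IntegrableDerivative

section Green

variable {E : Type*} [NormedAddCommGroup E] [NormedSpace ℝ E] {a₁ a₂ : ℝ × ℝ → E} {p q : ℝ × ℝ}

theorem integral_boundary_eq_integral_rotation_of_hasFDerivAt_off_countable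
    {a₁' a₂' : ℝ × ℝ → ℝ × ℝ →L[ℝ] E} (hpq : p ≤ q) {s : Set (ℝ × ℝ)} (hs : s.Countable)
    (hc₁ : ContinuousOn a₁ (Set.Icc p q)) (hc₂ : ContinuousOn a₂ (Set.Icc p q))
    (hd₁ : ∀ x ∈ (Set.Ioo p.1 q.1 ×ˢ Set.Ioo p.2 q.2) \ s, HasFDerivAt a₁ (a₁' x) x)
    (hd₂ : ∀ x ∈ (Set.Ioo p.1 q.1 ×ˢ Set.Ioo p.2 q.2) \ s, HasFDerivAt a₂ (a₂' x) x)
    (hint : IntegrableOn (fun x => a₂' x (1, 0) - a₁' x (0, 1)) (Set.Icc p q)) :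
    (∫ t in p.1..q.1, a₁ (t, p.2)) + (∫ t in p.2..q.2, a₂ (q.1, t)) -
        (∫ t in p.1..q.1, a₁ (t, q.2)) - (∫ t in p.2..q.2, a₂ (p.1, t)) =
      ∫ x in Set.Icc p q, (a₂' x (1, 0) - a₁' x (0, 1)) := by
  have divergence_eq := integral_divergence_prod_Icc_of_hasFDerivAt_off_countable_of_le
    a₂ (-a₁) a₂' (-a₁') p q hpq s hs hc₂ hc₁.neg hd₂ (fun x hx => (hd₁ x hx).neg)
    (by simpa only [sub_eq_add_neg, Pi.neg_apply, neg_apply] using hint)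
  simp only [Pi.neg_apply, neg_apply, intervalIntegral.integral_neg,
    ← sub_eq_add_neg] at divergence_eq
  rw [divergence_eq]
  abel

theorem stmt_2_general (hpq : p ≤ q) (ha₁ : ContDiffOn ℝ 1 a₁ (Set.Icc p q))
    (ha₂ : ContDiffOn ℝ 1 a₂ (Set.Icc p q)) :
    (∫ t in p.1..q.1, a₁ (t, p.2)) + (∫ t in p.2..q.2, a₂ (q.1, t)) -
        (∫ t in p.1..q.1, a₁ (t, q.2)) - (∫ t in p.2..q.2, a₂ (p.1, t)) =
      ∫ x in Set.Icc p q, (fderiv ℝ a₂ x (1, 0) - fderiv ℝ a₁ x (0, 1)) := by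
  have hasFDerivAt_of_mem {a : ℝ × ℝ → E} (ha : ContDiffOn ℝ 1 a (Set.Icc p q)) :
      ∀ x ∈ (Set.Ioo p.1 q.1 ×ˢ Set.Ioo p.2 q.2) \ ∅, HasFDerivAt a (fderiv ℝ a x) x := by
    rintro x ⟨⟨hx₁, hx₂⟩, -⟩
    have Icc_mem_nhds_x : Set.Icc p q ∈ nhds x :=
      Set.Icc_prod_eq p q ▸ prod_mem_nhds (Icc_mem_nhds hx₁.1 hx₁.2) (Icc_mem_nhds hx₂.1 hx₂.2)
    exact ((ha.contDiffAt Icc_mem_nhds_x).differentiableAt one_ne_zero).hasFDerivAt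
  have integrableOn_partial {a : ℝ × ℝ → E} (ha : ContDiffOn ℝ 1 a (Set.Icc p q)) (v : ℝ × ℝ) :
      IntegrableOn (fun x => fderiv ℝ a x v) (Set.Icc p q) :=
    (integrableOn_fderiv_of_convex_of_isCompact (convex_Icc p q) isCompact_Icc
      volume ha).apply_continuousLinearMap v
  exact integral_boundary_eq_integral_rotation_of_hasFDerivAt_off_countable hpq
    Set.countable_empty ha₁.continuousOn ha₂.continuousOn
    (hasFDerivAt_of_mem ha₁) (hasFDerivAt_of_mem ha₂)
    ((integrableOn_partial ha₂ (1, 0)).sub (integrableOn_partial ha₁ (0, 1)))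

end Green

theorem stmt_2 (U : Set (ℝ × ℝ)) (hU : IsOpen U) (a₁ a₂ : ℝ × ℝ → ℝ)
    (ha₁ : ContDiffOn ℝ 1 a₁ U) (ha₂ : ContDiffOn ℝ 1 a₂ U) :
    ∀ p₁ q₁ p₂ q₂ : ℝ, p₁ ≤ q₁ → p₂ ≤ q₂ →
      Set.Icc ((p₁, p₂) : ℝ × ℝ) (q₁, q₂) ⊆ U →
      (∫ t in p₁..q₁, a₁ (t, p₂)) + (∫ t in p₂..q₂, a₂ (q₁, t)) -
          (∫ t in p₁..q₁, a₁ (t, q₂)) - (∫ t in p₂..q₂, a₂ (p₁, t)) =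
        ∫ x in Set.Icc ((p₁, p₂) : ℝ × ℝ) (q₁, q₂),
          (fderiv ℝ a₂ x (1, 0) - fderiv ℝ a₁ x (0, 1)) :=
  fun _ _ _ _ h₁ h₂ hsub =>
    stmt_2_general (Prod.mk_le_mk.mpr ⟨h₁, h₂⟩) (ha₁.mono hsub) (ha₂.mono hsub)
end

section
/- Let U ⊆ (Fin (n+1) → ℝ) be open and let a : (Fin (n+1) → ℝ) → (Fin (n+1) → ℝ) be a vector field with ContDiffOn ℝ 1 a U. Then the following are equivalent: (i) for all p q : Fin (n+1) → ℝ with p i < q i for every i and Set.Icc p q ⊆ U, the outward flux of a through the boundary of the box Set.Icc p q vanishes: flux(a,p,q) = 0; (ii) for every x ∈ U, div a x = 0 (direct closedness). -/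
open MeasureTheory

/-!
By the divergence theorem the flux through the boundary of a box is the integral of the divergence
over the box. Closed balls of the sup norm are boxes, and the integral of a function `g` over a
small set `s` around a point `x` of continuity is `μ s • g x + o(μ s)`; hence a continuous function
whose integral over every box vanishes is zero.
-/

open Filter Metric Set Topology

variable {E : Type*} [NormedAddCommGroup E] [NormedSpace ℝ E]

section VanishingIntegrals

variable [CompleteSpace E]

theorem eq_zero_of_frequently_setIntegral_eq_zero {X α : Type*} [TopologicalSpace X]
    [MeasurableSpace X] [OpensMeasurableSpace X] {μ : Measure X} [IsLocallyFiniteMeasure μ]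
    {g : X → E} {x : X} (hg : ContinuousAt g x) (hgm : StronglyMeasurableAtFilter g (𝓝 x) μ)
    {l : Filter α} {s : α → Set X} (hs : Tendsto s l (𝓝 x).smallSets)
    (hzero : ∃ᶠ i in l, 0 < μ.real (s i) ∧ ∫ y in s i, g y ∂μ = 0) : g x = 0 := by
  by_contra hne
  have hnorm : 0 < ‖g x‖ := norm_pos_iff.2 hne
  have hsmall : ∀ᶠ i in l,
      ‖(∫ y in s i, g y ∂μ) - μ.real (s i) • g x‖ ≤ ‖g x‖ / 2 * ‖μ.real (s i)‖ :=
    (hg.integral_sub_linear_isLittleO_ae hgm hs).bound (half_pos hnorm)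
  obtain ⟨i, ⟨hpos, hint⟩, hle⟩ := (hzero.and_eventually hsmall).exists
  rw [hint, zero_sub, norm_neg, norm_smul, Real.norm_of_nonneg hpos.le] at hle
  nlinarith [mul_pos hpos hnorm]

theorem closedBall_pi_eq_Icc {ι : Type*} [Fintype ι] (x : ι → ℝ) {r : ℝ} (hr : 0 ≤ r) :
    closedBall x r = Icc (fun i ↦ x i - r) (fun i ↦ x i + r) := by
  simp only [closedBall_pi x hr, Real.closedBall_eq_Icc, pi_univ_Icc]

theorem forall_setIntegral_Icc_eq_zero_iff {ι : Type*} [Finite ι] {μ : Measure (ι → ℝ)}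
    [IsLocallyFiniteMeasure μ] [μ.IsOpenPosMeasure] {U : Set (ι → ℝ)} (hU : IsOpen U)
    {g : (ι → ℝ) → E} (hg : ContinuousOn g U) :
    (∀ p q : ι → ℝ, (∀ i, p i < q i) → Icc p q ⊆ U → ∫ y in Icc p q, g y ∂μ = 0) ↔
      ∀ x ∈ U, g x = 0 := by
  have := Fintype.ofFinite ι
  refine ⟨fun h x hx ↦ ?_, fun h p q _ hpq ↦
    setIntegral_eq_zero_of_forall_eq_zero fun y hy ↦ h y (hpq hy)⟩
  have hballs : Tendsto (closedBall x) (𝓝[>] 0) (𝓝 x).smallSets :=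
    (tendsto_closedBall_smallSets x).mono_left nhdsWithin_le_nhds
  have hsub : ∀ᶠ r in 𝓝[>] 0, closedBall x r ⊆ U :=
    tendsto_smallSets_iff.1 hballs U (hU.mem_nhds hx)
  refine eq_zero_of_frequently_setIntegral_eq_zero (μ := μ)
    (hg.continuousAt (hU.mem_nhds hx)) (hg.stronglyMeasurableAtFilter hU x hx) hballs
    (Eventually.frequently ?_)
  filter_upwards [self_mem_nhdsWithin, hsub] with r (hr : 0 < r) hrU
  refine ⟨ENNReal.toReal_pos (measure_closedBall_pos μ x hr).ne'
    measure_closedBall_lt_top.ne, ?_⟩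
  rw [closedBall_pi_eq_Icc x hr.le] at hrU ⊢
  exact h _ _ (fun i ↦ by linarith) hrU

end VanishingIntegrals

section Divergence

/-- The divergence `∑ i, ∂ᵢ aᵢ` of a field `a` on `ℝ^ι` whose components take values in `E`. Partial
derivatives are taken componentwise, so a component that is not differentiable at `x` contributes
the junk value `0`. -/
noncomputable def divergence {ι : Type*} [Fintype ι] [DecidableEq ι] (a : (ι → ℝ) → ι → E)
    (x : ι → ℝ) : E :=
  ∑ i, fderiv ℝ (fun z ↦ a z i) x (Pi.single i 1)

/-- The outward flux of a field `a` through the boundary of the box `Icc p q`. The faces orthogonal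
to the `i`-th axis are parametrized by the remaining `n` coordinates. -/
noncomputable def boxFlux {n : ℕ} (a : (Fin (n + 1) → ℝ) → Fin (n + 1) → E)
    (p q : Fin (n + 1) → ℝ) : E :=
  ∑ i : Fin (n + 1),
    ((∫ y in Icc (p ∘ i.succAbove) (q ∘ i.succAbove), a (i.insertNth (q i) y) i) -
      ∫ y in Icc (p ∘ i.succAbove) (q ∘ i.succAbove), a (i.insertNth (p i) y) i)

theorem continuousOn_divergence {ι : Type*} [Fintype ι] [DecidableEq ι] {a : (ι → ℝ) → ι → E}
    {U : Set (ι → ℝ)} (hU : IsOpen U) (ha : ContDiffOn ℝ 1 a U) :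
    ContinuousOn (divergence a) U :=
  continuousOn_finsetSum _ fun i _ ↦
    ((contDiffOn_pi.1 ha i).continuousOn_fderiv_of_isOpen hU le_rfl).clm_apply continuousOn_const

theorem integral_divergence_eq_boxFlux {n : ℕ} {a : (Fin (n + 1) → ℝ) → Fin (n + 1) → E}
    {p q : Fin (n + 1) → ℝ} (hpq : p ≤ q) (hcont : ContinuousOn a (Icc p q))
    (hdiff : ∀ x ∈ univ.pi fun i ↦ Ioo (p i) (q i), DifferentiableAt ℝ a x)
    (hint : IntegrableOn (divergence a) (Icc p q)) :
    ∫ x in Icc p q, divergence a x = boxFlux a p q :=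
  integral_divergence_of_hasFDerivAt_off_countable' p q hpq (fun i z ↦ a z i)
    (fun i ↦ fderiv ℝ fun z ↦ a z i) ∅ countable_empty (continuousOn_pi.1 hcont)
    (fun x hx i ↦ (differentiableAt_pi.1 (hdiff x hx.1) i).hasFDerivAt) hint

end Divergence

theorem stmt_3_general [CompleteSpace E] {n : ℕ} {U : Set (Fin (n + 1) → ℝ)} (hU : IsOpen U)
    {a : (Fin (n + 1) → ℝ) → Fin (n + 1) → E} (ha : DifferentiableOn ℝ a U)
    (hdiv : ContinuousOn (divergence a) U) :
    (∀ p q : Fin (n + 1) → ℝ, (∀ i, p i < q i) → Icc p q ⊆ U → boxFlux a p q = 0) ↔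
      ∀ x ∈ U, divergence a x = 0 := by
  rw [← forall_setIntegral_Icc_eq_zero_iff (μ := volume) hU hdiv]
  refine forall₄_congr fun p q hlt hpq ↦ ?_
  have hinterior : (univ.pi fun i ↦ Ioo (p i) (q i)) ⊆ U :=
    ((pi_mono fun i _ ↦ Ioo_subset_Icc_self).trans_eq (pi_univ_Icc p q)).trans hpq
  rw [integral_divergence_eq_boxFlux (fun i ↦ (hlt i).le) (ha.continuousOn.mono hpq)
    (fun x hx ↦ ha.differentiableAt (hU.mem_nhds (hinterior hx)))
    ((hdiv.mono hpq).integrableOn_compact isCompact_Icc)]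

theorem stmt_3 (n : ℕ) (U : Set (Fin (n + 1) → ℝ)) (hU : IsOpen U)
    (a : (Fin (n + 1) → ℝ) → (Fin (n + 1) → ℝ)) (ha : ContDiffOn ℝ 1 a U) :
    (∀ p q : Fin (n + 1) → ℝ, (∀ i, p i < q i) → Set.Icc p q ⊆ U →
        (∑ i : Fin (n + 1),
          ((∫ y in Set.Icc (p ∘ i.succAbove) (q ∘ i.succAbove), a (i.insertNth (q i) y) i) -
            (∫ y in Set.Icc (p ∘ i.succAbove) (q ∘ i.succAbove), a (i.insertNth (p i) y) i))) = 0) ↔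
      (∀ x ∈ U, (∑ i : Fin (n + 1), fderiv ℝ (fun z => a z i) x (Pi.single i 1)) = 0) :=
  stmt_3_general hU (ha.differentiableOn one_ne_zero) (continuousOn_divergence hU ha)
end

section
/- Let U ⊆ E be open and let φ : E → ℝ satisfy ContDiffOn ℝ 2 φ U. Then the following are equivalent: (i) for every test function ψ on U, ∫ x in U, ⟪∇φ x, ∇ψ x⟫ = 0; (ii) φ is harmonic on U, i.e. Δφ x = 0 for every x ∈ U. -/
open MeasureTheory RealInnerProductSpace

/-!
Integrating by parts in each direction of an orthonormal basis gives Green's first identity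
`∫ ⟪∇ φ, ∇ ψ⟫ = -∫ ψ Δφ`, without boundary term since `ψ` is compactly supported in `U`. Hence (i)
says that the continuous function `Δφ` is orthogonal to all test functions on `U`, which by the
fundamental lemma of the calculus of variations means that it vanishes on `U`.
-/

section

open Gradient Laplacian Set
open scoped ContDiff

section TestFunctions

variable {F G W : Type*} [NormedAddCommGroup F] [NormedSpace ℝ F]
  [NormedAddCommGroup G] [NormedSpace ℝ G] [NormedAddCommGroup W] [NormedSpace ℝ W]

theorem integrable_bilinear_of_tsupport_subset {X : Type*} [TopologicalSpace X]
    [MeasurableSpace X] [OpensMeasurableSpace X] {μ : Measure X} [IsFiniteMeasureOnCompacts μ]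
    {U : Set X} {f : X → F} {g : X → G} (B : F →L[ℝ] G →L[ℝ] W) (hU : IsOpen U)
    (hf : ContinuousOn f U) (hg : Continuous g) (hgc : HasCompactSupport g)
    (hgU : tsupport g ⊆ U) : Integrable (fun x => B (f x) (g x)) μ := by
  have hsupp : Function.support (fun x => B (f x) (g x)) ⊆ Function.support g :=
    fun x hx hgx => hx (by simp only [hgx, map_zero])
  have hcont : ContinuousOn (fun x => B (f x) (g x)) U :=
    (B.continuous.comp_continuousOn hf).clm_apply hg.continuousOn
  exact (hcont.continuous_of_tsupport_subset hU
    ((closure_mono hsupp).trans hgU)).integrable_of_hasCompactSupport (hgc.mono hsupp)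

variable {E : Type*} [NormedAddCommGroup E] [NormedSpace ℝ E] [FiniteDimensional ℝ E]
  [MeasurableSpace E] [BorelSpace E] {μ : Measure E} [μ.IsAddHaarMeasure] {U : Set E}

theorem integral_bilinear_fderiv_right_eq_neg_left_of_tsupport_subset {f : E → F} {g : E → G}
    (B : F →L[ℝ] G →L[ℝ] W) (v : E) (hU : IsOpen U) (hf : ContDiffOn ℝ 1 f U)
    (hg : ContDiff ℝ 1 g) (hgc : HasCompactSupport g) (hgU : tsupport g ⊆ U) :
    ∫ x, B (f x) (fderiv ℝ g x v) ∂μ = -∫ x, B (fderiv ℝ f x v) (g x) ∂μ := by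
  have hf' : ContinuousOn (fun x => fderiv ℝ f x v) U :=
    (hf.continuousOn_fderiv_of_isOpen hU le_rfl).clm_apply continuousOn_const
  have hg' : Continuous fun x => fderiv ℝ g x v :=
    (hg.continuous_fderiv one_ne_zero).clm_apply continuous_const
  exact integral_bilinear_fderiv_right_eq_neg_left_of_integrable
    (integrable_bilinear_of_tsupport_subset B hU hf' hg.continuous hgc hgU)
    (integrable_bilinear_of_tsupport_subset B hU hf.continuousOn hg' (hgc.fderiv_apply ℝ v)
      ((tsupport_fderiv_apply_subset ℝ v).trans hgU))
    (integrable_bilinear_of_tsupport_subset B hU hf.continuousOn hg.continuous hgc hgU)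
    (fun x hx => (hf.differentiableOn one_ne_zero).differentiableAt (hU.mem_nhds (hgU hx)))
    (fun x _ => hg.differentiable one_ne_zero x)

theorem forall_integral_contDiff_smul_eq_zero_iff [CompleteSpace F] {f : E → F}
    (hU : IsOpen U) (hf : ContinuousOn f U) :
    (∀ ψ : E → ℝ, ContDiff ℝ ∞ ψ → HasCompactSupport ψ → tsupport ψ ⊆ U →
        ∫ x, ψ x • f x ∂μ = 0) ↔
      ∀ x ∈ U, f x = 0 := by
  constructor
  · intro h
    have hae : ∀ᵐ x ∂μ, x ∈ U → f x = 0 := hU.ae_eq_zero_of_integral_contDiff_smul_eq_zero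
      (hf.locallyIntegrableOn hU.measurableSet) h
    exact Measure.eqOn_open_of_ae_eq ((ae_restrict_iff' hU.measurableSet).2 hae) hU hf
      continuousOn_const
  · intro h ψ _ _ hψU
    refine integral_eq_zero_of_ae (.of_forall fun x => ?_)
    by_cases hx : x ∈ U
    · simp [h x hx]
    · simp [image_eq_zero_of_notMem_tsupport fun hxψ => hx (hψU hxψ)]

end TestFunctions

section Laplacian

variable {E F ι : Type*} [NormedAddCommGroup E] [InnerProductSpace ℝ E] [FiniteDimensional ℝ E]
  [NormedAddCommGroup F] [NormedSpace ℝ F] [Fintype ι]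

theorem laplacian_eq_sum_fderiv_fderiv (b : OrthonormalBasis ι ℝ E) (f : E → F) (x : E) :
    Δ f x = ∑ i, fderiv ℝ (fderiv ℝ f) x (b i) (b i) := by
  simp [InnerProductSpace.laplacian_eq_iteratedFDeriv_orthonormalBasis f b,
    iteratedFDeriv_two_apply]

theorem laplacian_eq_sum_fderiv_fderiv_apply (b : OrthonormalBasis ι ℝ E) {f : E → F} {x : E}
    (hf : DifferentiableAt ℝ (fderiv ℝ f) x) :
    Δ f x = ∑ i, fderiv ℝ (fun y => fderiv ℝ f y (b i)) x (b i) := by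
  simp [laplacian_eq_sum_fderiv_fderiv b, fderiv_clm_apply hf (differentiableAt_const _)]

theorem continuousOn_laplacian {U : Set E} {f : E → F} (hU : IsOpen U)
    (hf : ContDiffOn ℝ 2 f U) : ContinuousOn (Δ f) U := by
  have hf'' : ContinuousOn (fderiv ℝ (fderiv ℝ f)) U :=
    (hf.fderiv_of_isOpen hU one_add_one_eq_two.le).continuousOn_fderiv_of_isOpen hU le_rfl
  rw [funext (laplacian_eq_sum_fderiv_fderiv (stdOrthonormalBasis ℝ E) f)]
  fun_prop

theorem inner_gradient_gradient_eq_sum (b : OrthonormalBasis ι ℝ E) (f g : E → ℝ) (x : E) :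
    ⟪∇ f x, ∇ g x⟫ = ∑ i, fderiv ℝ f x (b i) * fderiv ℝ g x (b i) := by
  rw [← b.sum_inner_mul_inner]
  simp only [inner_gradient_left, inner_gradient_right, conj_trivial]

end Laplacian

section Green

theorem setIntegral_inner_gradient_eq_integral {E : Type*} [NormedAddCommGroup E]
    [InnerProductSpace ℝ E] [CompleteSpace E] [MeasurableSpace E] {μ : Measure E} {U : Set E}
    {ψ : E → ℝ} (V : E → E) (hψU : tsupport ψ ⊆ U) :
    ∫ x in U, ⟪V x, ∇ ψ x⟫ ∂μ = ∫ x, ⟪V x, ∇ ψ x⟫ ∂μ := by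
  refine setIntegral_eq_integral_of_forall_compl_eq_zero fun x hx => ?_
  have hψx : fderiv ℝ ψ x = 0 := fderiv_of_notMem_tsupport ℝ fun hxψ => hx (hψU hxψ)
  simp [inner_gradient_right, hψx]

variable {E : Type*} [NormedAddCommGroup E] [InnerProductSpace ℝ E] [FiniteDimensional ℝ E]
  [MeasurableSpace E] [BorelSpace E] {μ : Measure E} [μ.IsAddHaarMeasure] {U : Set E}
  {φ ψ : E → ℝ}

theorem integral_inner_gradient_gradient_eq_neg_integral_smul_laplacian (hU : IsOpen U)
    (hφ : ContDiffOn ℝ 2 φ U) (hψ : ContDiff ℝ 1 ψ) (hψc : HasCompactSupport ψ)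
    (hψU : tsupport ψ ⊆ U) :
    ∫ x, ⟪∇ φ x, ∇ ψ x⟫ ∂μ = -∫ x, ψ x • Δ φ x ∂μ := by
  let b := stdOrthonormalBasis ℝ E
  -- `B v L r = L v * r`, so the integration by parts differentiates `fderiv ℝ φ` as a whole.
  let B (v : E) : (E →L[ℝ] ℝ) →L[ℝ] ℝ →L[ℝ] ℝ :=
    (ContinuousLinearMap.mul ℝ ℝ).comp (ContinuousLinearMap.apply ℝ ℝ v)
  have hφ' : ContDiffOn ℝ 1 (fderiv ℝ φ) U := hφ.fderiv_of_isOpen hU one_add_one_eq_two.le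
  have hint (v : E) : Integrable (fun x => fderiv ℝ φ x v * fderiv ℝ ψ x v) μ :=
    integrable_bilinear_of_tsupport_subset (B v) hU hφ'.continuousOn
      ((hψ.continuous_fderiv one_ne_zero).clm_apply continuous_const) (hψc.fderiv_apply ℝ v)
      ((tsupport_fderiv_apply_subset ℝ v).trans hψU)
  have hint' (v : E) : Integrable (fun x => fderiv ℝ (fderiv ℝ φ) x v v * ψ x) μ :=
    integrable_bilinear_of_tsupport_subset (B v) hU
      ((hφ'.continuousOn_fderiv_of_isOpen hU le_rfl).clm_apply continuousOn_const)
      hψ.continuous hψc hψU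
  have hparts (v : E) : ∫ x, fderiv ℝ φ x v * fderiv ℝ ψ x v ∂μ =
      -∫ x, fderiv ℝ (fderiv ℝ φ) x v v * ψ x ∂μ :=
    integral_bilinear_fderiv_right_eq_neg_left_of_tsupport_subset (B v) v hU hφ' hψ hψc hψU
  calc ∫ x, ⟪∇ φ x, ∇ ψ x⟫ ∂μ
      = ∑ i, ∫ x, fderiv ℝ φ x (b i) * fderiv ℝ ψ x (b i) ∂μ := by
        simp_rw [inner_gradient_gradient_eq_sum b]
        exact integral_finsetSum _ fun i _ => hint (b i)
    _ = -∑ i, ∫ x, fderiv ℝ (fderiv ℝ φ) x (b i) (b i) * ψ x ∂μ := by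
        simp_rw [hparts, Finset.sum_neg_distrib]
    _ = -∫ x, ψ x • Δ φ x ∂μ := by
        rw [← integral_finsetSum _ fun i _ => hint' (b i)]
        simp_rw [laplacian_eq_sum_fderiv_fderiv b, smul_eq_mul, mul_comm (ψ _), Finset.sum_mul]

theorem stmt_4_general (hU : IsOpen U) (hφ : ContDiffOn ℝ 2 φ U) :
    (∀ ψ : E → ℝ, ContDiff ℝ ∞ ψ → HasCompactSupport ψ → tsupport ψ ⊆ U →
        ∫ x in U, ⟪∇ φ x, ∇ ψ x⟫ ∂μ = 0) ↔
      ∀ x ∈ U, Δ φ x = 0 := by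
  rw [← forall_integral_contDiff_smul_eq_zero_iff (μ := μ) hU (continuousOn_laplacian hU hφ)]
  refine forall₄_congr fun ψ hψ hψc hψU => ?_
  rw [setIntegral_inner_gradient_eq_integral _ hψU,
    integral_inner_gradient_gradient_eq_neg_integral_smul_laplacian hU hφ
      (hψ.of_le (mod_cast le_top)) hψc hψU, neg_eq_zero]

end Green

end

theorem stmt_4 (n : ℕ) (hn : 1 ≤ n) (U : Set (EuclideanSpace ℝ (Fin n))) (hU : IsOpen U)
    (φ : EuclideanSpace ℝ (Fin n) → ℝ) (hφ : ContDiffOn ℝ 2 φ U) :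
    (∀ ψ : EuclideanSpace ℝ (Fin n) → ℝ, ContDiff ℝ (⊤ : ℕ∞) ψ → HasCompactSupport ψ →
        tsupport ψ ⊆ U →
        ∫ x in U, ⟪gradient φ x, gradient ψ x⟫ = 0) ↔
      (∀ x ∈ U, (∑ i : Fin n,
          fderiv ℝ (fun y => fderiv ℝ φ y (EuclideanSpace.single i (1:ℝ))) x
            (EuclideanSpace.single i (1:ℝ))) = 0) := by
  have hφ' : DifferentiableOn ℝ (fderiv ℝ φ) U :=
    (hφ.fderiv_of_isOpen hU one_add_one_eq_two.le).differentiableOn one_ne_zero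
  refine (stmt_4_general hU hφ).trans (forall₂_congr fun x hx => ?_)
  simp only [laplacian_eq_sum_fderiv_fderiv_apply (EuclideanSpace.basisFun (Fin n) ℝ)
    (hφ'.differentiableAt (hU.mem_nhds hx)), EuclideanSpace.basisFun_apply]
end

section
/- Let U ⊆ E be an open convex set and let a : E → E be a vector field with ContDiffOn ℝ 1 a U. Then a admits a potential on U, i.e. there exists φ : E → ℝ with HasGradientAt φ (a x) x for every x ∈ U, if and only if the Jacobian of a is symmetric on U, i.e. for every x ∈ U and all i j : Fin n, ∂_i a_j x = ∂_j a_i x. -/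
open MeasureTheory RealInnerProductSpace

/-!
A potential of `a` is a primitive of the `1`-form `x ↦ ⟪a x, ·⟫`, whose derivative at `x` is the
bilinear form `(v, w) ↦ ⟪fderiv ℝ a x v, w⟫`. If a potential exists, this form is its second
derivative, hence symmetric; conversely, symmetry says that the `1`-form is closed, and the Poincaré
lemma on a convex set makes it exact. By linearity and continuity, symmetry only needs to be tested
on a family of vectors with dense span, such as the standard basis.
-/

section SpanningFamily

variable {𝕜 E ι : Type*} [RCLike 𝕜] [NormedAddCommGroup E] [InnerProductSpace 𝕜 E]

lemma isSymmetric_iff_of_dense_span_range {b : ι → E}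
    (hb : Dense (Submodule.span 𝕜 (Set.range b) : Set E)) (T : E →L[𝕜] E) :
    (T : E →ₗ[𝕜] E).IsSymmetric ↔ ∀ i j, inner 𝕜 (T (b i)) (b j) = inner 𝕜 (b i) (T (b j)) := by
  refine ⟨fun hT i j => hT (b i) (b j), fun hT => ?_⟩
  have symm_left (i : ι) (y : E) : inner 𝕜 (T (b i)) y = inner 𝕜 (b i) (T y) := by
    have functionals_eq : innerSL 𝕜 (T (b i)) = (innerSL 𝕜 (b i)).comp T :=
      ContinuousLinearMap.ext_on hb (Set.forall_mem_range.2 (hT i))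
    exact DFunLike.congr_fun functionals_eq y
  have symm_right (x y : E) : inner 𝕜 y (T x) = inner 𝕜 (T y) x := by
    have functionals_eq : (innerSL 𝕜 y).comp T = innerSL 𝕜 (T y) :=
      ContinuousLinearMap.ext_on hb <| Set.forall_mem_range.2 fun i => by
        simpa using congrArg (starRingEnd 𝕜) (symm_left i y)
    exact DFunLike.congr_fun functionals_eq x
  exact fun x y => (symm_right y x).symm

end SpanningFamily

lemma dense_span_range_euclideanSpace_single (𝕜 ι : Type*) [RCLike 𝕜] [Finite ι] [DecidableEq ι] :
    Dense (Submodule.span 𝕜 (Set.range fun i : ι => EuclideanSpace.single i (1 : 𝕜)) :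
      Set (EuclideanSpace 𝕜 ι)) := by
  have := Fintype.ofFinite ι
  have span_eq_top := (EuclideanSpace.basisFun ι 𝕜).toBasis.span_eq
  simp only [OrthonormalBasis.coe_toBasis, funext (EuclideanSpace.basisFun_apply ι 𝕜)]
    at span_eq_top
  simp only [span_eq_top, Submodule.top_coe, dense_univ]

section Derivatives

variable {E F : Type*} [NormedAddCommGroup E] [NormedSpace ℝ E]
  [NormedAddCommGroup F] [InnerProductSpace ℝ F] {a : E → F} {x : E}

lemma fderiv_inner_const_apply (ha : DifferentiableAt ℝ a x) (w : F) (v : E) :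
    fderiv ℝ (fun y => ⟪a y, w⟫) x v = ⟪fderiv ℝ a x v, w⟫ := by
  simp [fderiv_inner_apply ℝ ha (differentiableAt_const w)]

lemma hasFDerivAt_innerSL_comp (ha : DifferentiableAt ℝ a x) :
    HasFDerivAt (fun y => innerSL ℝ (a y)) ((innerSL ℝ).comp (fderiv ℝ a x)) x :=
  (innerSL ℝ).hasFDerivAt.comp x ha.hasFDerivAt

end Derivatives

section Potential

variable {E ι : Type*} [NormedAddCommGroup E] [InnerProductSpace ℝ E] {U : Set E} {a : E → E}
  {x : E}

lemma isSymmetric_fderiv_iff_partial_symm {b : ι → E}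
    (hb : Dense (Submodule.span ℝ (Set.range b) : Set E)) (ha : DifferentiableAt ℝ a x) :
    (fderiv ℝ a x : E →ₗ[ℝ] E).IsSymmetric ↔
      ∀ i j, fderiv ℝ (fun y => ⟪a y, b j⟫) x (b i) = fderiv ℝ (fun y => ⟪a y, b i⟫) x (b j) := by
  simp only [isSymmetric_iff_of_dense_span_range hb, fderiv_inner_const_apply ha,
    real_inner_comm (b _) (fderiv ℝ a x _)]

variable [CompleteSpace E]

lemma isSymmetric_fderiv_of_eventually_hasGradientAt {φ : E → ℝ}
    (hφ : ∀ᶠ y in nhds x, HasGradientAt φ (a y) y) (ha : DifferentiableAt ℝ a x) :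
    (fderiv ℝ a x : E →ₗ[ℝ] E).IsSymmetric := fun v w =>
  calc
    ⟪fderiv ℝ a x v, w⟫ = ⟪fderiv ℝ a x w, v⟫ :=
      second_derivative_symmetric_of_eventually (𝕜 := ℝ) (f' := fun y => innerSL ℝ (a y))
        (hφ.mono fun _ hy => hy.hasFDerivAt) (hasFDerivAt_innerSL_comp ha) v w
    _ = ⟪v, fderiv ℝ a x w⟫ := real_inner_comm _ _

lemma exists_hasGradientAt_of_isSymmetric_fderiv (hUopen : IsOpen U) (hUconv : Convex ℝ U)
    (ha : DifferentiableOn ℝ a U) (hsymm : ∀ x ∈ U, (fderiv ℝ a x : E →ₗ[ℝ] E).IsSymmetric) :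
    ∃ φ : E → ℝ, ∀ x ∈ U, HasGradientAt φ (a x) x := by
  have hω (x) (hx : x ∈ U) := hasFDerivAt_innerSL_comp (ha.differentiableAt (hUopen.mem_nhds hx))
  have closed (x) (hx : x ∈ U) (v w : E) :
      fderiv ℝ (fun y => innerSL ℝ (a y)) x v w = fderiv ℝ (fun y => innerSL ℝ (a y)) x w v := by
    rw [(hω x hx).fderiv]
    exact (hsymm x hx v w).trans (real_inner_comm _ _)
  exact hUconv.exists_forall_hasFDerivAt_of_fderiv_symmetric hUopen
    (fun x hx => (hω x hx).differentiableAt.differentiableWithinAt) closed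

theorem exists_hasGradientAt_iff_isSymmetric_fderiv (hUopen : IsOpen U) (hUconv : Convex ℝ U)
    (ha : DifferentiableOn ℝ a U) :
    (∃ φ : E → ℝ, ∀ x ∈ U, HasGradientAt φ (a x) x) ↔
      ∀ x ∈ U, (fderiv ℝ a x : E →ₗ[ℝ] E).IsSymmetric where
  mp := fun ⟨_, hφ⟩ _ hx =>
    isSymmetric_fderiv_of_eventually_hasGradientAt
      (Filter.eventually_of_mem (hUopen.mem_nhds hx) hφ)
      (ha.differentiableAt (hUopen.mem_nhds hx))
  mpr := exists_hasGradientAt_of_isSymmetric_fderiv hUopen hUconv ha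

theorem stmt_6_general {b : ι → E} (hb : Dense (Submodule.span ℝ (Set.range b) : Set E))
    (hUopen : IsOpen U) (hUconv : Convex ℝ U) (ha : DifferentiableOn ℝ a U) :
    (∃ φ : E → ℝ, ∀ x ∈ U, HasGradientAt φ (a x) x) ↔
      ∀ x ∈ U, ∀ i j,
        fderiv ℝ (fun y => ⟪a y, b j⟫) x (b i) = fderiv ℝ (fun y => ⟪a y, b i⟫) x (b j) :=
  (exists_hasGradientAt_iff_isSymmetric_fderiv hUopen hUconv ha).trans <|
    forall₂_congr fun _ hx =>
      isSymmetric_fderiv_iff_partial_symm hb (ha.differentiableAt (hUopen.mem_nhds hx))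

end Potential

theorem stmt_6 (n : ℕ) (hn : 1 ≤ n) (U : Set (EuclideanSpace ℝ (Fin n)))
    (hUopen : IsOpen U) (hUconv : Convex ℝ U)
    (a : EuclideanSpace ℝ (Fin n) → EuclideanSpace ℝ (Fin n))
    (ha : ContDiffOn ℝ 1 a U) :
    (∃ φ : EuclideanSpace ℝ (Fin n) → ℝ, ∀ x ∈ U, HasGradientAt φ (a x) x) ↔
      (∀ x ∈ U, ∀ i j : Fin n,
        fderiv ℝ (fun y => ⟪a y, EuclideanSpace.single j (1:ℝ)⟫) x
            (EuclideanSpace.single i (1:ℝ)) =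
          fderiv ℝ (fun y => ⟪a y, EuclideanSpace.single i (1:ℝ)⟫) x
            (EuclideanSpace.single j (1:ℝ))) :=
  stmt_6_general (dense_span_range_euclideanSpace_single ℝ (Fin n)) hUopen hUconv
    (ha.differentiableOn one_ne_zero)
end

section
/- Let U ⊆ E be open, let φ : E → ℝ satisfy ContDiffOn ℝ 1 φ U, let ψ be a test function on U, and set K := tsupport ψ. Then the Dirichlet energy along the variation φ + tψ is differentiable in t at 0 with derivative given by the first variation: HasDerivAt (fun t : ℝ => ∫ x in K, ‖∇φ x + t • ∇ψ x‖^2) (2 * ∫ x in K, ⟪∇φ x, ∇ψ x⟫) 0. -/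
open MeasureTheory RealInnerProductSpace

/-! On a compact set the gradients are continuous, hence square integrable, and the energy of the
variation is the squared norm of an affine curve `t ↦ u + t • v` in the Hilbert space `L²`. -/

section L2

variable {X E : Type*} [MeasurableSpace X] {μ : Measure X} [NormedAddCommGroup E]

theorem inner_toLp_toLp {𝕜 : Type*} [RCLike 𝕜] [InnerProductSpace 𝕜 E] {u v : X → E}
    (hu : MemLp u 2 μ) (hv : MemLp v 2 μ) :
    inner 𝕜 (hu.toLp u) (hv.toLp v) = ∫ x, inner 𝕜 (u x) (v x) ∂μ := by
  rw [L2.inner_def]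
  refine integral_congr_ae ?_
  filter_upwards [hu.coeFn_toLp, hv.coeFn_toLp] with x hux hvx
  rw [hux, hvx]

variable [InnerProductSpace ℝ E] {u v : X → E}

theorem norm_toLp_sq (hu : MemLp u 2 μ) : ‖hu.toLp u‖ ^ 2 = ∫ x, ‖u x‖ ^ 2 ∂μ := by
  simp_rw [← real_inner_self_eq_norm_sq]
  exact inner_toLp_toLp hu hu

theorem hasDerivAt_integral_norm_add_smul_sq (hu : MemLp u 2 μ) (hv : MemLp v 2 μ) (t : ℝ) :
    HasDerivAt (fun s : ℝ => ∫ x, ‖u x + s • v x‖ ^ 2 ∂μ)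
      (2 * ∫ x, ⟪u x + t • v x, v x⟫ ∂μ) t := by
  have hline (s : ℝ) : MemLp (u + s • v) 2 μ := hu.add (hv.const_smul s)
  have hcurve : HasDerivAt (fun s => (hline s).toLp (u + s • v)) (hv.toLp v) t := by
    simpa only [one_smul] using!
      ((hasDerivAt_id t).smul_const (hv.toLp v)).const_add (hu.toLp u)
  simpa only [inner_toLp_toLp, norm_toLp_sq, Pi.add_apply, Pi.smul_apply] using hcurve.norm_sq

end L2

theorem memLp_restrict_of_continuousOn_isCompact {X E : Type*} [TopologicalSpace X] [T2Space X]
    [MeasurableSpace X] [OpensMeasurableSpace X] {μ : Measure X} [IsFiniteMeasureOnCompacts μ]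
    [NormedAddCommGroup E] {K : Set X} {u : X → E} (hu : ContinuousOn u K) (hK : IsCompact K)
    (p : ENNReal) : MemLp u p (μ.restrict K) := by
  have : IsFiniteMeasure (μ.restrict K) := isFiniteMeasure_restrict.2 hK.measure_ne_top
  obtain ⟨C, hC⟩ := hK.exists_bound_of_continuousOn hu
  exact MemLp.of_bound (hu.aestronglyMeasurable_of_isCompact hK hK.measurableSet) C
    (ae_restrict_of_forall_mem hK.measurableSet hC)

theorem continuousOn_gradient_of_isOpen {𝕜 F : Type*} [RCLike 𝕜] [NormedAddCommGroup F]
    [InnerProductSpace 𝕜 F] [CompleteSpace F] {f : F → 𝕜} {U : Set F} {k : WithTop ℕ∞}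
    (hf : ContDiffOn 𝕜 k f U) (hU : IsOpen U) (hk : 1 ≤ k) : ContinuousOn (gradient f) U :=
  (InnerProductSpace.toDual 𝕜 F).symm.continuous.comp_continuousOn
    (hf.continuousOn_fderiv_of_isOpen hU hk)

theorem stmt_10_general {F : Type*} [NormedAddCommGroup F] [InnerProductSpace ℝ F]
    [CompleteSpace F] [MeasurableSpace F] [OpensMeasurableSpace F] {μ : Measure F}
    [IsFiniteMeasureOnCompacts μ] {U K : Set F} (hU : IsOpen U) (hK : IsCompact K) (hKU : K ⊆ U)
    {φ ψ : F → ℝ} (hφ : ContDiffOn ℝ 1 φ U) (hψ : ContDiffOn ℝ 1 ψ U) (t : ℝ) :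
    HasDerivAt (fun s : ℝ => ∫ x in K, ‖gradient φ x + s • gradient ψ x‖ ^ 2 ∂μ)
      (2 * ∫ x in K, ⟪gradient φ x + t • gradient ψ x, gradient ψ x⟫ ∂μ) t := by
  have memLp_gradient {f : F → ℝ} (hf : ContDiffOn ℝ 1 f U) :
      MemLp (gradient f) 2 (μ.restrict K) :=
    memLp_restrict_of_continuousOn_isCompact
      ((continuousOn_gradient_of_isOpen hf hU le_rfl).mono hKU) hK 2
  exact hasDerivAt_integral_norm_add_smul_sq (memLp_gradient hφ) (memLp_gradient hψ) t

theorem stmt_10 (n : ℕ) (hn : 1 ≤ n) (U : Set (EuclideanSpace ℝ (Fin n))) (hU : IsOpen U)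
    (φ : EuclideanSpace ℝ (Fin n) → ℝ) (hφ : ContDiffOn ℝ 1 φ U)
    (ψ : EuclideanSpace ℝ (Fin n) → ℝ) (hψ : ContDiff ℝ (⊤ : ℕ∞) ψ)
    (hψc : HasCompactSupport ψ) (hψU : tsupport ψ ⊆ U) :
    HasDerivAt (fun t : ℝ => ∫ x in tsupport ψ, ‖gradient φ x + t • gradient ψ x‖ ^ 2)
      (2 * ∫ x in tsupport ψ, ⟪gradient φ x, gradient ψ x⟫) 0 := by
  simpa only [zero_smul, add_zero] using
    stmt_10_general hU hψc hψU hφ (hψ.of_le (mod_cast le_top)).contDiffOn 0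
end

section
/- Let U ⊆ E be open, let φ : E → ℝ satisfy ContDiffOn ℝ 1 φ U, let ψ be a test function on U, set K := tsupport ψ, and assume ∇φ x ≠ 0 for every x ∈ K. Then the total-norm functional along the variation φ + tψ is differentiable in t at 0 with first variation HasDerivAt (fun t : ℝ => ∫ x in K, ‖∇φ x + t • ∇ψ x‖) (∫ x in K, ⟪∇φ x, ∇ψ x⟫ / ‖∇φ x‖) 0. -/
open MeasureTheory RealInnerProductSpace

/-!
Away from the origin the norm is differentiable with derivative `⟪x, ·⟫ / ‖x‖`, so the integrand
`t ↦ ‖∇φ x + t • ∇ψ x‖` has the expected derivative at `0` wherever `∇φ x ≠ 0`. By the reverse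
triangle inequality it is also `‖∇ψ x‖`-Lipschitz in `t`, and this Lipschitz constant is continuous,
hence integrable, on a compact set, so dominated convergence allows differentiation under the
integral sign.
-/

section Norm

variable {F : Type*} [NormedAddCommGroup F] [InnerProductSpace ℝ F]

theorem hasStrictFDerivAt_norm {x : F} (hx : x ≠ 0) :
    HasStrictFDerivAt (fun y : F => ‖y‖) (‖x‖⁻¹ • innerSL ℝ x) x := by
  have hsqrt := (hasStrictFDerivAt_norm_sq x).sqrt (pow_ne_zero 2 (norm_ne_zero_iff.2 hx))
  simp only [Real.sqrt_sq (norm_nonneg _)] at hsqrt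
  convert hsqrt using 1
  module

theorem hasDerivAt_norm_add_smul {a : F} (ha : a ≠ 0) (b : F) :
    HasDerivAt (fun t : ℝ => ‖a + t • b‖) (⟪a, b⟫ / ‖a‖) 0 := by
  have hline : HasDerivAt (fun t : ℝ => a + t • b) b 0 := by
    simpa using ((hasDerivAt_id (0 : ℝ)).smul_const b).const_add a
  have hnorm : HasFDerivAt (fun y : F => ‖y‖) (‖a‖⁻¹ • innerSL ℝ a) (a + (0 : ℝ) • b) := by
    simpa using (hasStrictFDerivAt_norm ha).hasFDerivAt
  simpa [Function.comp_def, div_eq_inv_mul] using hnorm.comp_hasDerivAt 0 hline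

end Norm

theorem lipschitzWith_norm_add_smul {F : Type*} [SeminormedAddCommGroup F] [NormedSpace ℝ F]
    (a b : F) : LipschitzWith ‖b‖₊ (fun t : ℝ => ‖a + t • b‖) := by
  refine LipschitzWith.of_dist_le_mul fun s t => ?_
  calc dist ‖a + s • b‖ ‖a + t • b‖
      ≤ ‖(a + s • b) - (a + t • b)‖ := abs_norm_sub_norm_le _ _
    _ = ‖b‖ * dist s t := by
      rw [add_sub_add_left_eq_sub, ← sub_smul, norm_smul, mul_comm, dist_eq_norm]

theorem hasDerivAt_integral_norm_add_smul {α F : Type*} [MeasurableSpace α] {μ : Measure α}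
    [NormedAddCommGroup F] [InnerProductSpace ℝ F] {f g : α → F} (hf : Integrable f μ)
    (hg : Integrable g μ) (hf₀ : ∀ᵐ x ∂μ, f x ≠ 0) :
    HasDerivAt (fun t : ℝ => ∫ x, ‖f x + t • g x‖ ∂μ) (∫ x, ⟪f x, g x⟫ / ‖f x‖ ∂μ) 0 := by
  have h_int (t : ℝ) : Integrable (fun x => ‖f x + t • g x‖) μ := (hf.add (hg.smul t)).norm
  have h_meas : AEStronglyMeasurable (fun x => ⟪f x, g x⟫ / ‖f x‖) μ :=
    (hf.1.inner hg.1).div₀ hf.1.norm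
  have h_lip (x : α) :
      LipschitzOnWith (Real.nnabs ‖g x‖) (fun t : ℝ => ‖f x + t • g x‖) Set.univ := by
    simpa using lipschitzWith_norm_add_smul (f x) (g x)
  have h_deriv : ∀ᵐ x ∂μ, HasDerivAt (fun t : ℝ => ‖f x + t • g x‖) (⟪f x, g x⟫ / ‖f x‖) 0 :=
    hf₀.mono fun x hx => hasDerivAt_norm_add_smul hx (g x)
  exact (hasDerivAt_integral_of_dominated_loc_of_lip Filter.univ_mem
    (.of_forall fun t => (h_int t).1) (h_int 0) h_meas (.of_forall h_lip) hg.norm h_deriv).2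

theorem continuousOn_gradient_of_contDiffOn {𝕜 F : Type*} [RCLike 𝕜] [NormedAddCommGroup F]
    [InnerProductSpace 𝕜 F] [CompleteSpace F] {f : F → 𝕜} {U : Set F}
    (hf : ContDiffOn 𝕜 1 f U) (hU : IsOpen U) : ContinuousOn (gradient f) U :=
  (InnerProductSpace.toDual 𝕜 F).symm.continuous.comp_continuousOn
    (hf.continuousOn_fderiv_of_isOpen hU le_rfl)

theorem stmt_12_general {F : Type*} [NormedAddCommGroup F] [InnerProductSpace ℝ F]
    [CompleteSpace F] [MeasurableSpace F] [OpensMeasurableSpace F] {μ : Measure F}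
    [IsFiniteMeasureOnCompacts μ] {U K : Set F} (hU : IsOpen U) (hK : IsCompact K) (hKU : K ⊆ U)
    {φ ψ : F → ℝ} (hφ : ContDiffOn ℝ 1 φ U) (hψ : ContDiffOn ℝ 1 ψ U)
    (hgrad : ∀ᵐ x ∂μ.restrict K, gradient φ x ≠ 0) :
    HasDerivAt (fun t : ℝ => ∫ x in K, ‖gradient φ x + t • gradient ψ x‖ ∂μ)
      (∫ x in K, ⟪gradient φ x, gradient ψ x⟫ / ‖gradient φ x‖ ∂μ) 0 := by
  have integrableOn_gradient {f : F → ℝ} (hf : ContDiffOn ℝ 1 f U) :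
      IntegrableOn (gradient f) K μ :=
    ((continuousOn_gradient_of_contDiffOn hf hU).mono hKU).integrableOn_compact hK
  exact hasDerivAt_integral_norm_add_smul (integrableOn_gradient hφ) (integrableOn_gradient hψ)
    hgrad

theorem stmt_12 (n : ℕ) (hn : 1 ≤ n) (U : Set (EuclideanSpace ℝ (Fin n))) (hU : IsOpen U)
    (φ : EuclideanSpace ℝ (Fin n) → ℝ) (hφ : ContDiffOn ℝ 1 φ U)
    (ψ : EuclideanSpace ℝ (Fin n) → ℝ) (hψ : ContDiff ℝ (⊤ : ℕ∞) ψ)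
    (hψc : HasCompactSupport ψ) (hψU : tsupport ψ ⊆ U)
    (hgrad : ∀ x ∈ tsupport ψ, gradient φ x ≠ 0) :
    HasDerivAt (fun t : ℝ => ∫ x in tsupport ψ, ‖gradient φ x + t • gradient ψ x‖)
      (∫ x in tsupport ψ, ⟪gradient φ x, gradient ψ x⟫ / ‖gradient φ x‖) 0 :=
  stmt_12_general hU hψc hψU hφ (hψ.of_le (mod_cast le_top)).contDiffOn
    (ae_restrict_of_forall_mem (isClosed_tsupport ψ).measurableSet hgrad)
end
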